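/- arXiv:2010.08913 — 6 statements merged into one kernel-verified Lean document; each statement's English description precedes it below -/
import Mathlib

section
/- Let A be a cBCK-algebra whose underlying partial order is a total order (a cBCK-chain). Then A is simple (its only ideals are {0} and A) if and only if for every x, y ∈ A with y ≠ 0 there exists a natural number n such that x·yⁿ = 0. -/
/-!
If `A` is simple and `y ≠ 0`, the set `{x | ∃ n, x·yⁿ = 0}` contains `y`, so once it is known to be
an ideal it must be all of `A`. It is an ideal because subtraction of a fixed element is monotone
(`CBCK.op_mono`): if `(x·z)·yⁿ = 0` and `z·yᵐ = 0`, then `x·yⁿ ≤ z`, whence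
`x·yⁿ⁺ᵐ ≤ z·yᵐ = 0`. Conversely, an ideal containing some `y ≠ 0` contains `x` as soon as it
contains some `x·yⁿ`, and `x·yⁿ = 0` for a suitable `n`.
-/

universe u v

/-- A commutative BCK-algebra structure on a type `A`. -/
structure CBCK (A : Type u) where
  op : A → A → A
  zero : A
  op_op_comm : ∀ x y z : A, op (op x y) z = op (op x z) y
  op_comm : ∀ x y : A, op x (op x y) = op y (op y x)
  op_self : ∀ x : A, op x x = zero
  op_zero : ∀ x : A, op x zero = x

namespace CBCK

variable {A : Type u}

/-- The meet `x ∧ y := y·(y·x)`. -/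
def meet (C : CBCK A) (x y : A) : A := C.op y (C.op y x)

/-- A subset `I` is an ideal: `0 ∈ I` and `x·y ∈ I`, `y ∈ I` imply `x ∈ I`. -/
def IsIdeal (C : CBCK A) (I : Set A) : Prop :=
  C.zero ∈ I ∧ ∀ x y : A, C.op x y ∈ I → y ∈ I → x ∈ I

/-- A prime ideal: a proper ideal such that `x ∧ y ∈ P` implies `x ∈ P` or `y ∈ P`. -/
def IsPrimeIdeal (C : CBCK A) (P : Set A) : Prop :=
  C.IsIdeal P ∧ P ≠ Set.univ ∧ ∀ x y : A, C.meet x y ∈ P → x ∈ P ∨ y ∈ P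

/-- The ideal generated by a subset `S`: the smallest ideal containing `S`. -/
def idealGen (C : CBCK A) (S : Set A) : Set A :=
  ⋂₀ {I : Set A | C.IsIdeal I ∧ S ⊆ I}

/-- The spectrum: the set of prime ideals. -/
def Spec (C : CBCK A) : Type u := {P : Set A // C.IsPrimeIdeal P}

/-- `σ(I) = {P ∈ X(A) : I ⊄ P}`. -/
def sigmaSet (C : CBCK A) (I : Set A) : Set C.Spec := {P : C.Spec | ¬ I ⊆ P.1}

/-- `σ(a) = σ((a])`. -/
def sigmaPt (C : CBCK A) (a : A) : Set C.Spec := C.sigmaSet (C.idealGen {a})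

/-- Iterated subtraction: `x·y⁰ = x`, `x·yⁿ⁺¹ = (x·yⁿ)·y`. -/
def opPow (C : CBCK A) (x y : A) : ℕ → A
  | 0 => x
  | n + 1 => C.op (C.opPow x y n) y

/-- A subset `B` is a subalgebra: contains `0` and is closed under the operation. -/
def IsSubalg (C : CBCK A) (B : Set A) : Prop :=
  C.zero ∈ B ∧ ∀ x ∈ B, ∀ y ∈ B, C.op x y ∈ B

/-- The subalgebra generated by a subset. -/
def subalgGen (C : CBCK A) (S : Set A) : Set A :=
  ⋂₀ {B : Set A | C.IsSubalg B ∧ S ⊆ B}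

/-- `I` is an ideal of the subalgebra `B`. -/
def IsIdealIn (C : CBCK A) (B I : Set A) : Prop :=
  I ⊆ B ∧ C.zero ∈ I ∧ ∀ x ∈ B, ∀ y ∈ B, C.op x y ∈ I → y ∈ I → x ∈ I

/-- `P` is a prime ideal of the subalgebra `B`. -/
def IsPrimeIdealIn (C : CBCK A) (B P : Set A) : Prop :=
  C.IsIdealIn B P ∧ P ≠ B ∧ ∀ x ∈ B, ∀ y ∈ B, C.meet x y ∈ P → x ∈ P ∨ y ∈ P

/-- The spectrum of a subalgebra `B`: its set of prime ideals. -/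
def SpecIn (C : CBCK A) (B : Set A) : Type u := {P : Set A // C.IsPrimeIdealIn B P}

/-- The annihilator `S* = {a : a ∧ s = 0 for all s ∈ S}`. -/
def ann (C : CBCK A) (S : Set A) : Set A := {a : A | ∀ s ∈ S, C.meet a s = C.zero}

/-- The annihilator of `S` computed inside the subalgebra `B`. -/
def annIn (C : CBCK A) (B S : Set A) : Set A :=
  {a : A | a ∈ B ∧ ∀ s ∈ S, C.meet a s = C.zero}

/-- `A` is involutory: every ideal `I` satisfies `I = I**`. -/
def Involutory (C : CBCK A) : Prop := ∀ I : Set A, C.IsIdeal I → C.ann (C.ann I) = I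

/-- The subalgebra `B` is involutory. -/
def InvolutoryIn (C : CBCK A) (B : Set A) : Prop :=
  ∀ I : Set A, C.IsIdealIn B I → C.annIn B (C.annIn B I) = I

/-- The data of `A` being the cBCK-union of the family of subalgebras `Aset`:
the subalgebras cover `A`, pairwise intersect in `{0}`, and the operation between
distinct members is `x·y = x`. -/
def IsUnionFamily (C : CBCK A) {Λ : Type v} (Aset : Λ → Set A) : Prop :=
  (∀ x : A, ∃ l : Λ, x ∈ Aset l) ∧
  (∀ l : Λ, C.IsSubalg (Aset l)) ∧
  (∀ l m : Λ, l ≠ m → Aset l ∩ Aset m = {C.zero}) ∧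
  (∀ l m : Λ, l ≠ m → ∀ x ∈ Aset l, ∀ y ∈ Aset m, C.op x y = x)

end CBCK

namespace CBCK

variable {A : Type u} (C : CBCK A)

theorem zero_op (q : A) : C.op C.zero q = C.zero := by
  have h : C.op C.zero (C.op C.zero q) = C.zero := by
    rw [C.op_comm, C.op_zero, C.op_self]
  -- Replace the left `0` by `0·(0·q)` and exchange the two subtractions.
  calc C.op C.zero q = C.op (C.op C.zero (C.op C.zero q)) q := by rw [h]
    _ = C.op (C.op C.zero q) (C.op C.zero q) := C.op_op_comm _ _ _
    _ = C.zero := C.op_self _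

/-- Subtracting a fixed element is monotone. If `a ≤ b` then `a = b·(b·a)`, so
`a·c = (b·c)·(b·a) ≤ b·c`. -/
theorem op_mono {a b : A} (c : A) (h : C.op a b = C.zero) :
    C.op (C.op a c) (C.op b c) = C.zero := by
  have ha : C.op b (C.op b a) = a := by rw [← C.op_comm, h, C.op_zero]
  have hac : C.op a c = C.op (C.op b c) (C.op b a) := by
    conv_lhs => rw [← ha]
    exact C.op_op_comm _ _ _
  rw [hac, C.op_op_comm, C.op_self, C.zero_op]

theorem opPow_mono {a b : A} (y : A) (h : C.op a b = C.zero) (n : ℕ) :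
    C.op (C.opPow a y n) (C.opPow b y n) = C.zero := by
  induction n with
  | zero => exact h
  | succ n ih => exact C.op_mono y ih

theorem opPow_add (x y : A) (n m : ℕ) :
    C.opPow x y (n + m) = C.opPow (C.opPow x y n) y m := by
  induction m with
  | zero => rfl
  | succ m ih => exact congrArg (fun t => C.op t y) ih

theorem opPow_op (x z y : A) (n : ℕ) :
    C.opPow (C.op x z) y n = C.op (C.opPow x y n) z := by
  induction n with
  | zero => rfl
  | succ n ih =>
    change C.op (C.opPow (C.op x z) y n) y = C.op (C.op (C.opPow x y n) y) z
    rw [ih, C.op_op_comm]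

/-- The elements reduced to `0` by repeatedly subtracting `y` form an ideal; it is in fact the
ideal generated by `y`. -/
theorem isIdeal_opPow_eq_zero (y : A) :
    C.IsIdeal {x : A | ∃ n : ℕ, C.opPow x y n = C.zero} := by
  refine ⟨⟨0, rfl⟩, ?_⟩
  rintro x z ⟨n, hn⟩ ⟨m, hm⟩
  rw [C.opPow_op] at hn
  have h := C.opPow_mono y hn m
  rw [hm, C.op_zero, ← C.opPow_add] at h
  exact ⟨n + m, h⟩

theorem IsIdeal.mem_of_opPow_mem {C : CBCK A} {I : Set A} (hI : C.IsIdeal I) {x y : A}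
    (hy : y ∈ I) : ∀ n : ℕ, C.opPow x y n ∈ I → x ∈ I
  | 0, h => h
  | n + 1, h => hI.mem_of_opPow_mem hy n (hI.2 _ _ h hy)

end CBCK

/-- A cBCK-chain is simple iff for all `x y` with `y ≠ 0`
there is `n` with `x·yⁿ = 0`. -/
theorem cbck_chain_simple_iff {A : Type u} (C : CBCK A)
    (htotal : ∀ x y : A, C.op x y = C.zero ∨ C.op y x = C.zero) :
    (∀ I : Set A, C.IsIdeal I → I = {C.zero} ∨ I = Set.univ) ↔
      ∀ x y : A, y ≠ C.zero → ∃ n : ℕ, C.opPow x y n = C.zero := by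
  constructor
  · intro hs x y hy
    have hyI : y ∈ {x : A | ∃ n : ℕ, C.opPow x y n = C.zero} := ⟨1, C.op_self y⟩
    rcases hs _ (C.isIdeal_opPow_eq_zero y) with h | h
    · rw [h] at hyI
      exact absurd hyI hy
    · exact h.symm.subset (Set.mem_univ x)
  · intro h I hI
    by_cases hex : ∃ y ∈ I, y ≠ C.zero
    · obtain ⟨y, hyI, hy⟩ := hex
      refine Or.inr (Set.eq_univ_of_forall fun x => ?_)
      obtain ⟨n, hn⟩ := h x y hy
      exact hI.mem_of_opPow_mem hyI n (hn ▸ hI.1)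
    · push Not at hex
      exact Or.inl (Set.eq_singleton_iff_unique_mem.2 ⟨hI.1, hex⟩)
end

section
/- Let U = ⋃̇_{λ∈Λ} A_λ be a cBCK-union. An ideal P of U is prime if and only if there exist an index μ ∈ Λ and a prime ideal Q of A_μ such that P = Q ∪ ⋃_{λ≠μ} A_λ (i.e., P consists of all of A_λ for each λ ≠ μ together with Q in place of A_μ). -/
/-!
In a cBCK-union, elements of distinct members have meet `0`. Hence a prime ideal `P` omitting some
`a ∈ A_μ` contains every other member `A_l`, so it is determined by `Q = P ∩ A_μ`, which is prime
in `A_μ`. Conversely, distinct members share only `0 ∈ Q`, so an element of `A_μ` lies in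
`Q ∪ ⋃_{l ≠ μ} A_l` exactly when it lies in `Q`; properness and primeness therefore only need to
be checked inside `A_μ`, where they hold for `Q`.
-/

universe u v

/-- In a cBCK-union `U = ⋃̇ A_λ`, an ideal `P` is prime iff
`P = Q ∪ ⋃_{λ ≠ μ} A_λ` for some index `μ` and prime ideal `Q` of `A_μ`. -/
theorem prime_ideal_of_union_iff {U : Type u} (C : CBCK U) {Λ : Type v}
    (Aset : Λ → Set U) (hU : C.IsUnionFamily Aset)
    (P : Set U) (hP : C.IsIdeal P) :
    C.IsPrimeIdeal P ↔
      ∃ (μ : Λ) (Q : Set U), C.IsPrimeIdealIn (Aset μ) Q ∧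
        P = Q ∪ ⋃ l ∈ {l : Λ | l ≠ μ}, Aset l := by
  obtain ⟨hcov, hsub, hint, hop⟩ := hU
  constructor
  · rintro ⟨-, hne, hprime⟩
    obtain ⟨a, ha⟩ := (Set.ne_univ_iff_exists_notMem P).1 hne
    obtain ⟨μ, haμ⟩ := hcov a
    have hother : ∀ l, l ≠ μ → Aset l ⊆ P := by
      intro l hl y hy
      refine (hprime a y ?_).resolve_left ha
      rw [CBCK.meet, hop l μ hl y hy a haμ, C.op_self]
      exact hP.1
    refine ⟨μ, P ∩ Aset μ, ⟨⟨Set.inter_subset_right, ⟨hP.1, (hsub μ).1⟩, ?_⟩, ?_, ?_⟩, ?_⟩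
    · exact fun x hx y _ hxy hyQ => ⟨hP.2 x y hxy.1 hyQ.1, hx⟩
    · intro h
      exact ha (h.symm ▸ haμ : a ∈ P ∩ Aset μ).1
    · intro x hx y hy hxy
      exact (hprime x y hxy.1).imp (fun h => ⟨h, hx⟩) (fun h => ⟨h, hy⟩)
    · ext x
      simp only [Set.mem_union, Set.mem_inter_iff, Set.mem_iUnion, Set.mem_ofPred_eq]
      constructor
      · intro hx
        obtain ⟨l, hl⟩ := hcov x
        by_cases h : l = μ
        · exact Or.inl ⟨hx, h ▸ hl⟩
        · exact Or.inr ⟨l, h, hl⟩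
      · rintro (h | ⟨l, h, hl⟩)
        · exact h.1
        · exact hother l h hl
  · rintro ⟨μ, Q, ⟨⟨hQsub, hQ0, -⟩, hQne, hQprime⟩, rfl⟩
    have hmem : ∀ x ∈ Aset μ, x ∈ (Q ∪ ⋃ l ∈ {l : Λ | l ≠ μ}, Aset l) → x ∈ Q := by
      intro x hx hxP
      simp only [Set.mem_union, Set.mem_iUnion, Set.mem_ofPred_eq] at hxP
      rcases hxP with h | ⟨l, hne, hl⟩
      · exact h
      · have h0 : x ∈ Aset l ∩ Aset μ := ⟨hl, hx⟩
        rw [hint l μ hne] at h0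
        exact (Set.mem_singleton_iff.1 h0) ▸ hQ0
    have hother : ∀ l, l ≠ μ → ∀ x ∈ Aset l, x ∈ (Q ∪ ⋃ l ∈ {l : Λ | l ≠ μ}, Aset l) :=
      fun l hl x hx => Or.inr (Set.mem_biUnion (show l ∈ {l : Λ | l ≠ μ} from hl) hx)
    refine ⟨hP, ?_, ?_⟩
    · intro h
      exact hQne (hQsub.antisymm fun x hx => hmem x hx (h ▸ Set.mem_univ x))
    · intro x y hxy
      obtain ⟨l, hl⟩ := hcov x
      obtain ⟨m, hm⟩ := hcov y
      by_cases hlμ : l = μ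
      · by_cases hmμ : m = μ
        · subst hlμ
          subst hmμ
          have hmeet : C.meet x y ∈ Aset m :=
            (hsub m).2 y hm _ ((hsub m).2 y hm x hl)
          exact (hQprime x hl y hm (hmem _ hmeet hxy)).imp Or.inl Or.inl
        · exact Or.inr (hother m hmμ y hm)
      · exact Or.inl (hother l hlμ x hl)
end

section
/- Let U = ⋃̇_{λ∈Λ} A_λ be a cBCK-union and let I = ⋃̇_{λ∈Λ} I_λ be an ideal of U, where each I_λ is an ideal of A_λ. Then the annihilator of I in U satisfies I* = ⋃̇_{λ∈Λ} I_λ*, where I_λ* is the annihilator of I_λ computed in A_λ. -/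
/-!
An element of `U` lies in some member `A_λ`, and meets of elements of distinct members vanish:
`s·a = s` gives `a ∧ s = s·(s·a) = s·s = 0`. So for `a ∈ A_λ`, annihilating every `I_μ` amounts to
annihilating `I_λ` alone.
-/

universe u v

/-- In a cBCK-union `U = ⋃̇ A_λ`, if `I = ⋃̇ I_λ` is an ideal of `U`
with each `I_λ` an ideal of `A_λ`, then `I* = ⋃̇ I_λ*` (annihilators in the
respective algebras). -/
theorem ann_of_union {U : Type u} (C : CBCK U) {Λ : Type v}
    (Aset : Λ → Set U) (hU : C.IsUnionFamily Aset)
    (I : Λ → Set U) (hI : ∀ l : Λ, C.IsIdealIn (Aset l) (I l))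
    (hIdeal : C.IsIdeal (⋃ l : Λ, I l)) :
    C.ann (⋃ l : Λ, I l) = ⋃ l : Λ, C.annIn (Aset l) (I l) := by
  ext a
  simp only [CBCK.ann, CBCK.annIn, Set.mem_iUnion, Set.mem_ofPred_eq]
  constructor
  · intro h
    obtain ⟨l, hl⟩ := hU.1 a
    exact ⟨l, hl, fun s hs => h s ⟨l, hs⟩⟩
  · rintro ⟨l, hl, h⟩ s ⟨m, hs⟩
    by_cases hlm : m = l
    · subst hlm
      exact h s hs
    · -- Across distinct members `s·a = s`, hence `a ∧ s = s·(s·a) = s·s = 0`.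
      have hsa : C.op s a = s := hU.2.2.2 m l hlm s ((hI m).1 hs) a hl
      rw [CBCK.meet, hsa, C.op_self]
end

section
/- Let U = ⋃̇_{λ∈Λ} A_λ be a cBCK-union. Then U is involutory if and only if each A_λ is involutory. -/
/-!
Elements of distinct members of a cBCK-union have meet `0`. Hence, for `s ∈ A_λ`, whether `s`
annihilates an ideal `I` of the union only depends on `I ∩ A_λ`, and an element of `A_λ` annihilates
a set `S` as soon as it annihilates `S ∩ A_λ` (`meet_eq_zero_of_mem`). So double annihilators in
`U` restrict to double annihilators in each `A_λ`. Ideals restrict as well, and conversely an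
ideal of `A_λ` is already an ideal of `U`, because `x·y = x` when `y ∈ A_λ` and `x ∉ A_λ`.
-/


universe u v

namespace CBCK

variable {A : Type u}

theorem subset_ann_ann (C : CBCK A) (I : Set A) : I ⊆ C.ann (C.ann I) :=
  fun x hx s hs => (C.op_comm s x).trans (hs x hx)

theorem IsIdealIn.subset_annIn_annIn {C : CBCK A} {B I : Set A} (hI : C.IsIdealIn B I) :
    I ⊆ C.annIn B (C.annIn B I) :=
  fun x hx => ⟨hI.1 hx, fun s hs => (C.op_comm s x).trans (hs.2 x hx)⟩

/-- To see that `x ∈ A_l` and `y` have meet `0`, one may assume `y ∈ A_l`: otherwise `y` lies in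
another member and `y·(y·x) = y·y = 0`. -/
theorem IsUnionFamily.meet_eq_zero_of_mem {C : CBCK A} {Λ : Type v} {Aset : Λ → Set A}
    (hU : C.IsUnionFamily Aset) {l : Λ} {x y : A} (hx : x ∈ Aset l)
    (h : y ∈ Aset l → C.meet x y = C.zero) : C.meet x y = C.zero := by
  obtain ⟨m, hm⟩ := hU.1 y
  by_cases hml : m = l
  · exact h (hml ▸ hm)
  · rw [meet, hU.2.2.2 m l hml y hm x hx, C.op_self]

theorem IsUnionFamily.isIdeal_of_isIdealIn {C : CBCK A} {Λ : Type v} {Aset : Λ → Set A}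
    (hU : C.IsUnionFamily Aset) {l : Λ} {I : Set A} (hI : C.IsIdealIn (Aset l) I) :
    C.IsIdeal I := by
  refine ⟨hI.2.1, fun x y hxy hy => ?_⟩
  obtain ⟨m, hm⟩ := hU.1 x
  by_cases hml : m = l
  · exact hI.2.2 x (hml ▸ hm) y (hI.1 hy) hxy hy
  · rwa [hU.2.2.2 m l hml x hm y (hI.1 hy)] at hxy

end CBCK

/-- A cBCK-union `U = ⋃̇ A_λ` is involutory iff each `A_λ` is
involutory. -/
theorem involutory_union_iff {U : Type u} (C : CBCK U) {Λ : Type v}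
    (Aset : Λ → Set U) (hU : C.IsUnionFamily Aset) :
    C.Involutory ↔ ∀ l : Λ, C.InvolutoryIn (Aset l) := by
  constructor
  · intro h l I hI
    refine Set.Subset.antisymm (fun a ha => ?_) hI.subset_annIn_annIn
    rw [← h I (hU.isIdeal_of_isIdealIn hI)]
    exact fun s hs => hU.meet_eq_zero_of_mem ha.1 fun hsl => ha.2 s ⟨hsl, hs⟩
  · intro h I hI
    refine Set.Subset.antisymm (fun a ha => ?_) (C.subset_ann_ann I)
    obtain ⟨l, hl⟩ := hU.1 a
    have hIl : C.IsIdealIn (Aset l) (I ∩ Aset l) :=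
      ⟨Set.inter_subset_right, ⟨hI.1, (hU.2.1 l).1⟩,
        fun x hx y _ hxy hy => ⟨hI.2 x y hxy.1 hy.1, hx⟩⟩
    have hmem : a ∈ C.annIn (Aset l) (C.annIn (Aset l) (I ∩ Aset l)) :=
      ⟨hl, fun s hs => ha s fun i hi =>
        hU.meet_eq_zero_of_mem hs.1 fun hil => hs.2 i ⟨hi, hil⟩⟩
    rw [h l _ hIl] at hmem
    exact hmem.1
end

section
/- Let A be a cBCK-algebra. Every nonempty irreducible closed subset of X(A) has the form V(P) := {Q ∈ X(A) : P ⊆ Q} for some prime ideal P, and V(P) is the closure of the singleton {P}. Consequently X(A) is quasi-sober. -/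
/-!
The generic point of an irreducible closed set `D` is the intersection `P` of all prime ideals
in `D`. If `x ∉ P` and `y ∉ P`, the basic open sets `{Q | x ∉ Q}` and `{Q | y ∉ Q}` both meet `D`,
hence by irreducibility they have a common point in `D`; a prime ideal omitting `x` and `y` omits
`x ∧ y`, so `x ∧ y ∉ P`, and `P` is prime. Writing `D = V(I)`, the ideal `I` lies in every member
of `D`, so `I ⊆ P` and `V(P) ⊆ V(I) = D ⊆ V(P)`. Finally `V(P)` is the closure of `{P}` for every
prime ideal `P`, because every closed set `V(J)` is upward closed under inclusion.
-/

universe u v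

namespace CBCK

theorem isIdeal_sInter {A : Type u} (C : CBCK A) (F : Set (Set A))
    (hF : ∀ I ∈ F, C.IsIdeal I) : C.IsIdeal (⋂₀ F) :=
  ⟨fun I hI => (hF I hI).1, fun x y hxy hy I hI => (hF I hI).2 x y (hxy I hI) (hy I hI)⟩

theorem isIdeal_idealGen {A : Type u} (C : CBCK A) (S : Set A) : C.IsIdeal (C.idealGen S) :=
  C.isIdeal_sInter _ fun _ hI => hI.1

theorem mem_sigmaPt {A : Type u} (C : CBCK A) (a : A) (Q : C.Spec) :
    Q ∈ C.sigmaPt a ↔ a ∉ Q.1 := by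
  refine not_congr ⟨fun h => h ?_, fun h x hx => ?_⟩
  · exact fun I hI => hI.2 rfl
  · exact hx Q.1 ⟨Q.2.1, Set.singleton_subset_iff.2 h⟩

/-- Every closed set has the form `V(I)`. -/
theorem exists_eq_of_isClosed {A : Type u} (C : CBCK A) [TopologicalSpace C.Spec]
    (hT : ∀ s : Set C.Spec, IsOpen s ↔ ∃ I : Set A, C.IsIdeal I ∧ s = C.sigmaSet I)
    {D : Set C.Spec} (hD : IsClosed D) : ∃ I : Set A, D = {Q : C.Spec | I ⊆ Q.1} := by
  obtain ⟨I, -, hI⟩ := (hT _).1 hD.isOpen_compl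
  refine ⟨I, ?_⟩
  rw [← compl_compl D, hI]
  ext Q
  simp [sigmaSet]

theorem closure_singleton_eq {A : Type u} (C : CBCK A) [TopologicalSpace C.Spec]
    (hT : ∀ s : Set C.Spec, IsOpen s ↔ ∃ I : Set A, C.IsIdeal I ∧ s = C.sigmaSet I)
    (P : C.Spec) : closure {P} = {Q : C.Spec | P.1 ⊆ Q.1} := by
  apply Set.Subset.antisymm
  · refine closure_minimal (Set.singleton_subset_iff.2 (Set.Subset.refl P.1)) ?_
    exact ⟨(hT _).2 ⟨P.1, P.2.1, rfl⟩⟩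
  · intro Q hQ
    obtain ⟨J, hJ⟩ := C.exists_eq_of_isClosed hT (isClosed_closure (s := {P}))
    have hP : P ∈ closure {P} := subset_closure rfl
    rw [hJ] at hP ⊢
    exact Set.Subset.trans hP hQ

/-- The intersection of an irreducible set of prime ideals is prime. -/
theorem isPrimeIdeal_sInter {A : Type u} (C : CBCK A) [TopologicalSpace C.Spec]
    (hT : ∀ s : Set C.Spec, IsOpen s ↔ ∃ I : Set A, C.IsIdeal I ∧ s = C.sigmaSet I)
    {D : Set C.Spec} (hD : IsIrreducible D) :
    C.IsPrimeIdeal (⋂₀ (Subtype.val '' D)) := by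
  have hopen (a : A) : IsOpen (C.sigmaPt a) := (hT _).2 ⟨_, C.isIdeal_idealGen {a}, rfl⟩
  have hmeets (a : A) (ha : a ∉ ⋂₀ (Subtype.val '' D)) : (D ∩ C.sigmaPt a).Nonempty := by
    simp only [Set.mem_sInter, not_forall] at ha
    obtain ⟨_, ⟨Q, hQ, rfl⟩, haQ⟩ := ha
    exact ⟨Q, hQ, (C.mem_sigmaPt a Q).2 haQ⟩
  refine ⟨C.isIdeal_sInter _ ?_, ?_, fun x y hxy => ?_⟩
  · rintro _ ⟨Q, -, rfl⟩
    exact Q.2.1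
  · obtain ⟨Q, hQ⟩ := hD.1
    intro h
    exact Q.2.2.1 (Set.univ_subset_iff.1 (h ▸ Set.sInter_subset_of_mem ⟨Q, hQ, rfl⟩))
  · by_contra! hnot
    obtain ⟨Q, hQ, hxQ, hyQ⟩ :=
      hD.2 _ _ (hopen x) (hopen y) (hmeets x hnot.1) (hmeets y hnot.2)
    rcases Q.2.2.2 x y (hxy Q.1 ⟨Q, hQ, rfl⟩) with h | h
    · exact (C.mem_sigmaPt x Q).1 hxQ h
    · exact (C.mem_sigmaPt y Q).1 hyQ h

end CBCK

/-- Every irreducible closed set in the spectrum of a cBCK-algebra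
is of the form `V(P) = {Q : P ⊆ Q}` for a prime ideal `P`, and equals the closure
of `{P}`; consequently the spectrum is quasi-sober. -/
theorem spec_irreducible_closed_eq_V_and_quasiSober {A : Type u} (C : CBCK A)
    [ts : TopologicalSpace C.Spec]
    (hT : ∀ s : Set C.Spec, IsOpen s ↔ ∃ I : Set A, C.IsIdeal I ∧ s = C.sigmaSet I) :
    (∀ D : Set C.Spec, IsClosed D → IsIrreducible D →
      ∃ P : C.Spec, D = {Q : C.Spec | P.1 ⊆ Q.1} ∧ D = closure {P}) ∧
      QuasiSober C.Spec := by
  have key : ∀ D : Set C.Spec, IsClosed D → IsIrreducible D →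
      ∃ P : C.Spec, D = {Q : C.Spec | P.1 ⊆ Q.1} ∧ D = closure {P} := by
    intro D hcl hirr
    let P : C.Spec := ⟨⋂₀ (Subtype.val '' D), C.isPrimeIdeal_sInter hT hirr⟩
    have hDP : D = {Q : C.Spec | P.1 ⊆ Q.1} := by
      apply Set.Subset.antisymm
      · exact fun Q hQ => Set.sInter_subset_of_mem ⟨Q, hQ, rfl⟩
      · obtain ⟨I, hI⟩ := C.exists_eq_of_isClosed hT hcl
        have hIP : I ⊆ P.1 := by
          refine Set.subset_sInter ?_
          rintro _ ⟨Q, hQ, rfl⟩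
          rw [hI] at hQ
          exact hQ
        intro Q hQ
        rw [hI]
        exact hIP.trans hQ
    exact ⟨P, hDP, hDP.trans (C.closure_singleton_eq hT P).symm⟩
  refine ⟨key, ⟨fun {D} hirr hcl => ?_⟩⟩
  obtain ⟨P, -, hP⟩ := key D hcl hirr
  exact ⟨P, hP.symm⟩
end

section
/- Let U = ⋃̇_{λ∈Λ} A_λ be a cBCK-union over an arbitrary index set Λ. Then the spectrum X(U) is homeomorphic to the disjoint union ⨆_{λ∈Λ} X(A_λ) equipped with the disjoint union topology. -/
/-!
Write `U` for the union of the subalgebras `A l`. For a prime ideal `Q` of `A l` the set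
`extend Q = Q ∪ ⋃_{m ≠ l} A m` is a prime ideal of `U`, because `x · y = x` whenever `x` and `y`
lie in distinct members. Conversely, if `P` is a prime ideal of `U` and `x ∉ P` with `x ∈ A l`, then
every `y` in another member satisfies `x ∧ y = 0 ∈ P`, hence `y ∈ P`, so `P = extend (P ∩ A l)`.
Thus `(l, Q) ↦ extend Q` is a bijection from the disjoint union of the spectra onto `X(U)`
(`extend_bijective`).

For the topologies, `I ⊆ extend Q` holds exactly when `I ∩ A l ⊆ Q`. Hence the trace of `σ(I)` on
the `l`-th summand is `σ(I ∩ A l)`, which is open. Conversely, a family of ideals `I l` of the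
members glues to an ideal `I` of `U` with `I ∩ A l = I l` for every `l` (`isIdeal_glue`,
`glue_inter`), so every open set of the disjoint union comes from an open set `σ(I)` of `X(U)`.
-/

universe u v

namespace CBCK

variable {U : Type u} {C : CBCK U} {Λ : Type v} {Aset : Λ → Set U}

theorem IsUnionFamily.eq_zero (hU : C.IsUnionFamily Aset) {l m : Λ} (h : l ≠ m) {x : U}
    (hl : x ∈ Aset l) (hm : x ∈ Aset m) : x = C.zero := by
  have hx : x ∈ Aset l ∩ Aset m := ⟨hl, hm⟩
  rw [hU.2.2.1 l m h] at hx
  exact hx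

/-- For `x ∈ A l`, an arbitrary `y` either lies in `A l` as well or leaves `x` unchanged. -/
theorem IsUnionFamily.mem_or_op_eq (hU : C.IsUnionFamily Aset) {l : Λ} {x : U}
    (hx : x ∈ Aset l) (y : U) : y ∈ Aset l ∨ C.op x y = x := by
  obtain ⟨m, hm⟩ := hU.1 y
  by_cases h : l = m
  · subst h
    exact Or.inl hm
  · exact Or.inr (hU.2.2.2 l m h x hx y hm)

/-- The trace of an ideal of `U` on a subalgebra `B` is an ideal of `B`. -/
theorem IsIdeal.inter {I : Set U} (hI : C.IsIdeal I) {B : Set U} (hB : C.IsSubalg B) :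
    C.IsIdealIn B (I ∩ B) :=
  ⟨Set.inter_subset_right, ⟨hI.1, hB.1⟩,
    fun x hx y _ hxy hy => ⟨hI.2 x y hxy.1 hy.1, hx⟩⟩

/-- The set `Q ∪ ⋃_{m ≠ l} A m`, for an ideal `Q` of `A l`. Since distinct members meet only in
`0 ∈ Q`, it consists of the `x` that belong to `Q` if they belong to `B = A l`. -/
def extend (B Q : Set U) : Set U := {x | x ∈ B → x ∈ Q}

theorem subset_extend_iff {I B Q : Set U} : I ⊆ extend B Q ↔ I ∩ B ⊆ Q :=
  ⟨fun h _ hx => h hx.1 hx.2, fun h _ hx hB => h ⟨hx, hB⟩⟩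

theorem isPrimeIdeal_extend (hU : C.IsUnionFamily Aset) (l : Λ) {Q : Set U}
    (hQ : C.IsPrimeIdealIn (Aset l) Q) : C.IsPrimeIdeal (extend (Aset l) Q) := by
  obtain ⟨⟨hsub, h0, hid⟩, hne, hpr⟩ := hQ
  refine ⟨⟨fun _ => h0, fun x y hxy hy hx => ?_⟩, fun h => hne ?_, fun x y hxy => ?_⟩
  · rcases hU.mem_or_op_eq hx y with hyl | he
    · exact hid x hx y hyl (hxy ((hU.2.1 l).2 x hx y hyl)) (hy hyl)
    · rw [he] at hxy
      exact hxy hx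
  · refine hsub.antisymm fun x hx => ?_
    have hxe : x ∈ extend (Aset l) Q := h ▸ Set.mem_univ x
    exact hxe hx
  · by_contra! hcon
    obtain ⟨hx, hy⟩ := hcon
    simp only [extend, Set.mem_ofPred_eq, Classical.not_imp] at hx hy
    have hmeet : C.meet x y ∈ Aset l :=
      (hU.2.1 l).2 _ hy.1 _ ((hU.2.1 l).2 _ hy.1 _ hx.1)
    rcases hpr x hx.1 y hy.1 (hxy hmeet) with h | h
    · exact hx.2 h
    · exact hy.2 h

/-- The map `(l, Q) ↦ Q ∪ ⋃_{m ≠ l} A m` from the disjoint union of the spectra to `X(U)`. -/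
def extendSpec (hU : C.IsUnionFamily Aset) (p : Σ l : Λ, C.SpecIn (Aset l)) : C.Spec :=
  ⟨extend (Aset p.1) p.2.1, isPrimeIdeal_extend hU p.1 p.2.2⟩

theorem extend_bijective (hU : C.IsUnionFamily Aset) :
    Function.Bijective (extendSpec hU) := by
  constructor
  · rintro ⟨l, Q, hQ⟩ ⟨m, R, hR⟩ h
    have h' : extend (Aset l) Q = extend (Aset m) R := congrArg Subtype.val h
    by_cases hlm : l = m
    · subst hlm
      have hQR : Q = R := by
        ext x
        have hx := Set.ext_iff.1 h' x
        simp only [extend, Set.mem_ofPred_eq] at hx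
        exact ⟨fun hxQ => hx.1 (fun _ => hxQ) (hQ.1.1 hxQ),
          fun hxR => hx.2 (fun _ => hxR) (hR.1.1 hxR)⟩
      subst hQR
      rfl
    · -- An element of `A l` outside `Q` would also lie in `A m`, hence be `0 ∈ Q`.
      exfalso
      refine hQ.2.1 (hQ.1.1.antisymm fun x hx => ?_)
      by_contra hxQ
      have hxm : x ∈ Aset m := by
        by_contra hxm
        have hxe : x ∈ extend (Aset l) Q := by
          rw [h']
          exact fun hm => absurd hm hxm
        exact hxQ (hxe hx)
      rw [hU.eq_zero hlm hx hxm] at hxQ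
      exact hxQ hQ.1.2.1
  · rintro ⟨P, hP⟩
    obtain ⟨x, hxP⟩ := (Set.ne_univ_iff_exists_notMem P).1 hP.2.1
    obtain ⟨l, hxl⟩ := hU.1 x
    have hQ : C.IsPrimeIdealIn (Aset l) (P ∩ Aset l) :=
      ⟨hP.1.inter (hU.2.1 l), fun h => hxP (h.symm ▸ hxl : x ∈ P ∩ Aset l).1,
        fun a ha b hb hab => (hP.2.2 a b hab.1).imp (⟨·, ha⟩) (⟨·, hb⟩)⟩
    refine ⟨⟨l, P ∩ Aset l, hQ⟩, Subtype.ext ?_⟩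
    ext y
    refine ⟨fun hy => ?_, fun hy hl => ⟨hy, hl⟩⟩
    by_cases hyl : y ∈ Aset l
    · exact (hy hyl).1
    · obtain ⟨m, hm⟩ := hU.1 y
      have hml : m ≠ l := by
        rintro rfl
        exact hyl hm
      -- `x ∧ y = y · (y · x) = y · y = 0`, and `x ∉ P`.
      have h0 : C.meet x y ∈ P := by
        rw [meet, hU.2.2.2 m l hml y hm x hxl, C.op_self]
        exact hP.1.1
      exact (hP.2.2 x y h0).resolve_left hxP

/-- The union of a family of ideals `I l` of the members `A l`, described by its traces. -/
def glue (Aset I : Λ → Set U) : Set U := {x | ∀ l, x ∈ Aset l → x ∈ I l}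

theorem isIdeal_glue (hU : C.IsUnionFamily Aset) {I : Λ → Set U}
    (hI : ∀ l, C.IsIdealIn (Aset l) (I l)) : C.IsIdeal (glue Aset I) := by
  refine ⟨fun l _ => (hI l).2.1, fun x y hxy hy l hx => ?_⟩
  rcases hU.mem_or_op_eq hx y with hyl | he
  · exact (hI l).2.2 x hx y hyl (hxy l ((hU.2.1 l).2 x hx y hyl)) (hy l hyl)
  · rw [he] at hxy
    exact hxy l hx

theorem glue_inter (hU : C.IsUnionFamily Aset) {I : Λ → Set U}
    (hI : ∀ l, C.IsIdealIn (Aset l) (I l)) (l : Λ) : glue Aset I ∩ Aset l = I l := by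
  refine Set.Subset.antisymm (fun x hx => hx.1 l hx.2)
    fun x hx => ⟨fun m hm => ?_, (hI l).1 hx⟩
  by_cases h : l = m
  · exact h ▸ hx
  · rw [hU.eq_zero h ((hI l).1 hx) hm]
    exact (hI m).2.1

end CBCK

/-- For a cBCK-union `U = ⋃̇ A_λ`, the spectrum `X(U)` is
homeomorphic to the disjoint union `⨆ X(A_λ)` with the disjoint union topology,
where each `X(A_λ)` carries its own spectral topology. -/
theorem spec_union_homeomorph_sigma {U : Type u} (C : CBCK U) {Λ : Type v}
    (Aset : Λ → Set U) (hU : C.IsUnionFamily Aset)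
    [tU : TopologicalSpace C.Spec]
    (hT : ∀ s : Set C.Spec, IsOpen s ↔ ∃ I : Set U, C.IsIdeal I ∧ s = C.sigmaSet I)
    (tl : ∀ l : Λ, TopologicalSpace (C.SpecIn (Aset l)))
    (htl : ∀ (l : Λ) (s : Set (C.SpecIn (Aset l))),
      @IsOpen _ (tl l) s ↔
        ∃ I : Set U, C.IsIdealIn (Aset l) I ∧ s = {P : C.SpecIn (Aset l) | ¬ I ⊆ P.1}) :
    Nonempty (@Homeomorph C.Spec (Σ l : Λ, C.SpecIn (Aset l)) tU
      (@instTopologicalSpaceSigma Λ (fun l => C.SpecIn (Aset l)) tl)) := by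
  refine ⟨(Equiv.ofBijective _ (CBCK.extend_bijective hU)).toHomeomorph (fun s => ?_) |>.symm⟩
  rw [isOpen_sigma_iff, hT]
  constructor
  · intro h
    choose I hI hs using fun l => (htl l _).1 (h l)
    refine ⟨CBCK.glue Aset I, CBCK.isIdeal_glue hU hI, ?_⟩
    ext P
    obtain ⟨⟨l, Q⟩, rfl⟩ := (CBCK.extend_bijective hU).2 P
    have hQ := Set.ext_iff.1 (hs l) Q
    rw [← CBCK.glue_inter hU hI l] at hQ
    exact hQ.trans (not_congr CBCK.subset_extend_iff).symm
  · rintro ⟨I, hI, rfl⟩ l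
    exact (htl l _).2 ⟨I ∩ Aset l, hI.inter (hU.2.1 l),
      Set.ext fun Q => not_congr CBCK.subset_extend_iff⟩
end
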